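/- The optimal constant C_S in the inequality ‖η − η̄‖_{L∞(T²)} ≤ C_S ‖Δη‖_{L²(T²)} for η ∈ H²(T²) is given by C_S = (2π)^{-2} (∑_{k ∈ Z²\{0}} |k|^{-4})^{1/2}. -/

import Mathlib

open MeasureTheory Real Set

noncomputable section

/-- Fundamental domain of the flat unit torus `T² = ℝ²/ℤ²` (unit area). -/
def T2 : Set (ℝ × ℝ) := Set.Icc 0 1 ×ˢ Set.Icc 0 1

/-- A function on `ℝ²` descends to the torus `T²` iff it is `ℤ²`-periodic. -/
def Periodic2 (f : ℝ × ℝ → ℝ) : Prop :=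
  ∀ x : ℝ × ℝ, ∀ k : ℤ × ℤ, f (x.1 + k.1, x.2 + k.2) = f x

/-- First partial derivative. -/
def d1 (f : ℝ × ℝ → ℝ) (x : ℝ × ℝ) : ℝ := deriv (fun s => f (s, x.2)) x.1

/-- Second partial derivative. -/
def d2 (f : ℝ × ℝ → ℝ) (x : ℝ × ℝ) : ℝ := deriv (fun s => f (x.1, s)) x.2

/-- Laplacian on `T²`. -/
def lap (f : ℝ × ℝ → ℝ) : ℝ × ℝ → ℝ := fun x => d1 (d1 f) x + d2 (d2 f) x

/-- Mean value over `T²` (which has unit area). -/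
def meanT2 (f : ℝ × ℝ → ℝ) : ℝ := ∫ x in T2, f x

/-- Square of the `L²(T²)` norm. -/
def L2normSq (f : ℝ × ℝ → ℝ) : ℝ := ∫ x in T2, (f x) ^ 2

/-- The lattice sum `∑_{k ∈ ℤ²\{0}} |k|⁻⁴`. -/
def latticeSum : ℝ :=
  ∑' k : ℤ × ℤ, if k = 0 then 0 else 1 / (((k.1 : ℝ) ^ 2 + (k.2 : ℝ) ^ 2) ^ 2)

open scoped ComplexConjugate

lemma T2_int {E : Type*} [NormedAddCommGroup E] [NormedSpace ℝ E] (f : ℝ × ℝ → E)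
    (hf : Continuous f) :
    ∫ x in T2, f x = ∫ s in (0:ℝ)..1, ∫ t in (0:ℝ)..1, f (s, t) := by
  have hi : IntegrableOn f (Set.Icc (0:ℝ) 1 ×ˢ Set.Icc (0:ℝ) 1) (volume.prod volume) :=
    hf.continuousOn.integrableOn_compact (isCompact_Icc.prod isCompact_Icc)
  unfold T2
  rw [Measure.volume_eq_prod, setIntegral_prod _ hi]
  simp only [intervalIntegral.integral_of_le zero_le_one, integral_Icc_eq_integral_Ioc]

lemma T2_int_swap {E : Type*} [NormedAddCommGroup E] [NormedSpace ℝ E] (f : ℝ × ℝ → E)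
    (hf : Continuous f) :
    ∫ x in T2, f x = ∫ t in (0:ℝ)..1, ∫ s in (0:ℝ)..1, f (s, t) := by
  rw [T2_int f hf]
  simp only [intervalIntegral.integral_of_le zero_le_one]
  apply integral_integral_swap
  rw [Measure.prod_restrict]
  have hi : IntegrableOn f (Set.Icc (0:ℝ) 1 ×ˢ Set.Icc (0:ℝ) 1) (volume.prod volume) :=
    hf.continuousOn.integrableOn_compact (isCompact_Icc.prod isCompact_Icc)
  exact hi.mono_set (Set.prod_mono Ioc_subset_Icc_self Ioc_subset_Icc_self)

lemma d1_hasDeriv {f : ℝ × ℝ → ℝ} (hf : ContDiff ℝ 1 f) (s t : ℝ) :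
    HasDerivAt (fun s => f (s, t)) (d1 f (s, t)) s := by
  have : ContDiff ℝ 1 (fun s => f (s, t)) := hf.comp (contDiff_prodMk_left t)
  exact (this.differentiable one_ne_zero s).hasDerivAt

lemma d2_hasDeriv {f : ℝ × ℝ → ℝ} (hf : ContDiff ℝ 1 f) (s t : ℝ) :
    HasDerivAt (fun t => f (s, t)) (d2 f (s, t)) t := by
  have : ContDiff ℝ 1 (fun t => f (s, t)) := hf.comp (contDiff_prodMk_right s)
  exact (this.differentiable one_ne_zero t).hasDerivAt

lemma d1_eq {f : ℝ × ℝ → ℝ} (hf : ContDiff ℝ 1 f) :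
    d1 f = fun x => fderiv ℝ f x (1, 0) := by
  ext ⟨s, t⟩
  have h1 := (hf.differentiable one_ne_zero (s, t)).hasFDerivAt
  have h2 : HasDerivAt (fun s : ℝ => (s, t)) ((1:ℝ), (0:ℝ)) s :=
    (hasDerivAt_id s).prodMk (hasDerivAt_const s t)
  exact (h1.comp_hasDerivAt s h2).deriv

lemma d2_eq {f : ℝ × ℝ → ℝ} (hf : ContDiff ℝ 1 f) :
    d2 f = fun x => fderiv ℝ f x (0, 1) := by
  ext ⟨s, t⟩
  have h1 := (hf.differentiable one_ne_zero (s, t)).hasFDerivAt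
  have h2 : HasDerivAt (fun t : ℝ => (s, t)) ((0:ℝ), (1:ℝ)) t :=
    (hasDerivAt_const t s).prodMk (hasDerivAt_id t)
  exact (h1.comp_hasDerivAt t h2).deriv

lemma d1_cont {f : ℝ × ℝ → ℝ} (hf : ContDiff ℝ 1 f) : Continuous (d1 f) := by
  rw [d1_eq hf]
  exact (hf.continuous_fderiv one_ne_zero).clm_apply continuous_const

lemma d2_cont {f : ℝ × ℝ → ℝ} (hf : ContDiff ℝ 1 f) : Continuous (d2 f) := by
  rw [d2_eq hf]
  exact (hf.continuous_fderiv one_ne_zero).clm_apply continuous_const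

lemma d1_C1 {f : ℝ × ℝ → ℝ} (hf : ContDiff ℝ 2 f) : ContDiff ℝ 1 (d1 f) := by
  rw [d1_eq (hf.of_le one_le_two)]
  exact (hf.fderiv_right (m := 1) (by norm_num)).clm_apply contDiff_const

lemma d2_C1 {f : ℝ × ℝ → ℝ} (hf : ContDiff ℝ 2 f) : ContDiff ℝ 1 (d2 f) := by
  rw [d2_eq (hf.of_le one_le_two)]
  exact (hf.fderiv_right (m := 1) (by norm_num)).clm_apply contDiff_const

lemma d1_per {f : ℝ × ℝ → ℝ} (hp : Periodic2 f) : Periodic2 (d1 f) := by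
  intro x k
  have h : ∀ s, f (s + k.1, x.2 + k.2) = f (s, x.2) := fun s => hp (s, x.2) k
  unfold d1
  rw [← deriv_comp_add_const (f := fun s => f (s, x.2 + k.2))]
  simp only [h]

lemma d2_per {f : ℝ × ℝ → ℝ} (hp : Periodic2 f) : Periodic2 (d2 f) := by
  intro x k
  have h : ∀ s, f (x.1 + k.1, s + k.2) = f (x.1, s) := fun s => hp (x.1, s) k
  unfold d2
  rw [← deriv_comp_add_const (f := fun s => f (x.1 + k.1, s))]
  simp only [h]

/-- The character with frequency `-k`. -/
def Ek (k : ℤ × ℤ) (x : ℝ × ℝ) : ℂ :=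
  Complex.exp (-(2 * π * Complex.I) * (k.1 * x.1)) *
    Complex.exp (-(2 * π * Complex.I) * (k.2 * x.2))

lemma Ek_cont (k : ℤ × ℤ) : Continuous (Ek k) := by
  unfold Ek; fun_prop

lemma ibp1 (k : ℤ) (u u' : ℝ → ℝ) (hu : ∀ x, HasDerivAt u (u' x) x) (hc : Continuous u')
    (hp : u 1 = u 0) :
    ∫ s in (0:ℝ)..1, Complex.exp (-(2 * π * Complex.I) * (k * s)) * (u' s : ℂ) =
      (2 * π * Complex.I * k) *
        ∫ s in (0:ℝ)..1, Complex.exp (-(2 * π * Complex.I) * (k * s)) * (u s : ℂ) := by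
  have hE : ∀ x : ℝ, HasDerivAt (fun s : ℝ => Complex.exp (-(2 * π * Complex.I) * (k * s)))
      (Complex.exp (-(2 * π * Complex.I) * (k * x)) * (-(2 * π * Complex.I) * k)) x := by
    intro x
    have h0 : HasDerivAt (fun s : ℝ => (s : ℂ)) 1 x := Complex.ofRealCLM.hasDerivAt
    have := ((h0.const_mul (k : ℂ)).const_mul (-(2 * π * Complex.I))).cexp
    simpa [mul_assoc] using this
  rw [intervalIntegral.integral_mul_deriv_eq_deriv_mul (fun x _ => hE x)
    (fun x _ => (hu x).ofReal_comp)]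
  · have h1 : Complex.exp (-(2 * π * Complex.I) * (k * (1:ℝ))) = 1 := by
      rw [Complex.exp_eq_one_iff]
      exact ⟨-k, by push_cast; ring⟩
    rw [h1, hp, ← intervalIntegral.integral_const_mul]
    simp only [Complex.ofReal_zero, mul_zero, Complex.exp_zero, sub_self, zero_sub]
    rw [← intervalIntegral.integral_neg]
    congr 1
    ext s
    ring
  · apply Continuous.intervalIntegrable
    fun_prop
  · apply Continuous.intervalIntegrable
    fun_prop

lemma coef_d1 {f : ℝ × ℝ → ℝ} (hf : ContDiff ℝ 1 f) (hp : Periodic2 f) (k : ℤ × ℤ) :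
    ∫ x in T2, Ek k x * (d1 f x : ℂ) =
      (2 * π * Complex.I * k.1) * ∫ x in T2, Ek k x * (f x : ℂ) := by
  have c1 := d1_cont hf
  have c0 := hf.continuous
  have cE := Ek_cont k
  rw [T2_int_swap _ (by fun_prop), T2_int_swap _ (by fun_prop),
    ← intervalIntegral.integral_const_mul]
  congr 1
  ext t
  have := ibp1 k.1 (fun s => f (s, t)) (fun s => d1 f (s, t)) (fun s => d1_hasDeriv hf s t)
    (by fun_prop) (by simpa using hp (0, t) (1, 0))
  simp only [Ek]
  simp_rw [mul_right_comm _ (Complex.exp (-(2 * π * Complex.I) * (k.2 * t)))]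
  rw [intervalIntegral.integral_mul_const, intervalIntegral.integral_mul_const, this]
  ring

lemma coef_d2 {f : ℝ × ℝ → ℝ} (hf : ContDiff ℝ 1 f) (hp : Periodic2 f) (k : ℤ × ℤ) :
    ∫ x in T2, Ek k x * (d2 f x : ℂ) =
      (2 * π * Complex.I * k.2) * ∫ x in T2, Ek k x * (f x : ℂ) := by
  have c1 := d2_cont hf
  have c0 := hf.continuous
  have cE := Ek_cont k
  rw [T2_int _ (by fun_prop), T2_int _ (by fun_prop),
    ← intervalIntegral.integral_const_mul]
  congr 1
  ext s
  have := ibp1 k.2 (fun t => f (s, t)) (fun t => d2 f (s, t)) (fun t => d2_hasDeriv hf s t)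
    (by fun_prop) (by simpa using hp (s, 0) (0, 1))
  simp only [Ek]
  simp_rw [mul_assoc (Complex.exp (-(2 * π * Complex.I) * (k.1 * s)))]
  rw [intervalIntegral.integral_const_mul, intervalIntegral.integral_const_mul, this]
  ring

lemma T2_compact : IsCompact T2 := isCompact_Icc.prod isCompact_Icc

lemma lap_cont {f : ℝ × ℝ → ℝ} (hf : ContDiff ℝ 2 f) : Continuous (lap f) :=
  (d1_cont (d1_C1 hf)).add (d2_cont (d2_C1 hf))

lemma lap_per {f : ℝ × ℝ → ℝ} (hp : Periodic2 f) : Periodic2 (lap f) := by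
  intro x k
  simp only [lap, d1_per (d1_per hp) x k, d2_per (d2_per hp) x k]

lemma coef_lap {f : ℝ × ℝ → ℝ} (hf : ContDiff ℝ 2 f) (hp : Periodic2 f) (k : ℤ × ℤ) :
    ∫ x in T2, Ek k x * (lap f x : ℂ) =
      -(((2 * π) ^ 2 * ((k.1:ℝ) ^ 2 + (k.2:ℝ) ^ 2) : ℝ) : ℂ) * ∫ x in T2, Ek k x * (f x : ℂ) := by
  have c1 := d1_cont (d1_C1 hf)
  have c2 := d2_cont (d2_C1 hf)
  have cE := Ek_cont k
  have e : ∀ x, Ek k x * (lap f x : ℂ) =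
      Ek k x * (d1 (d1 f) x : ℂ) + Ek k x * (d2 (d2 f) x : ℂ) := by
    intro x; simp only [lap]; push_cast; ring
  simp_rw [e]
  have hf1 : ContDiff ℝ 1 f := hf.of_le one_le_two
  rw [integral_add, coef_d1 (d1_C1 hf) (d1_per hp), coef_d1 hf1 hp,
    coef_d2 (d2_C1 hf) (d2_per hp), coef_d2 hf1 hp]
  · push_cast
    ring_nf
    rw [Complex.I_sq]; ring
  · exact (by fun_prop : Continuous _).continuousOn.integrableOn_compact T2_compact
  · exact (by fun_prop : Continuous _).continuousOn.integrableOn_compact T2_compact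

local instance : MeasureSpace UnitAddCircle := ⟨AddCircle.haarAddCircle⟩

local instance : Measure.IsAddHaarMeasure (volume : Measure UnitAddCircle) :=
  inferInstanceAs (Measure.IsAddHaarMeasure AddCircle.haarAddCircle)

local instance : IsProbabilityMeasure (volume : Measure UnitAddCircle) :=
  inferInstanceAs (IsProbabilityMeasure AddCircle.haarAddCircle)

/-- The projection to the torus. -/
def qT (x : ℝ × ℝ) : UnitAddTorus (Fin 2) := ![(x.1 : UnitAddCircle), (x.2 : UnitAddCircle)]

lemma torus_int {E : Type*} [NormedAddCommGroup E] [NormedSpace ℝ E]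
    (H : UnitAddTorus (Fin 2) → E) :
    ∫ x, H x = ∫ x in T2, H (qT x) := by
  rw [UnitAddTorus.integral_preimage H 0]
  have h1 : {x : Fin 2 → ℝ | ∀ i, x i ∈ Ioc ((0 : Fin 2 → ℝ) i) ((0 : Fin 2 → ℝ) i + 1)} =
      MeasurableEquiv.finTwoArrow ⁻¹' (Ioc (0:ℝ) 1 ×ˢ Ioc (0:ℝ) 1) := by
    ext x
    simp [Fin.forall_fin_two, MeasurableEquiv.finTwoArrow]
  have h2 : ∀ x : Fin 2 → ℝ, (fun i => (x i : UnitAddCircle)) =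
      qT (MeasurableEquiv.finTwoArrow x) := by
    intro x
    ext i
    fin_cases i <;> simp [qT, MeasurableEquiv.finTwoArrow]
  simp_rw [h1, h2]
  rw [(volume_preserving_finTwoArrow ℝ).setIntegral_preimage_emb
    (MeasurableEquiv.measurableEmbedding _) (fun y => H (qT y))]
  congr 1
  rw [T2, Measure.volume_eq_prod, ← Measure.prod_restrict, ← Measure.prod_restrict,
    Measure.restrict_congr_set Ioc_ae_eq_Icc]

lemma exists_lift (g : ℝ × ℝ → ℝ) (hg : Continuous g) (hp : Periodic2 g) :
    ∃ F : C(UnitAddTorus (Fin 2), ℂ), ∀ x, F (qT x) = (g x : ℂ) := by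
  have hq : IsOpenQuotientMap ((↑) : ℝ → UnitAddCircle) := QuotientAddGroup.isOpenQuotientMap_mk
  have hqq := (hq.prodMap hq).isQuotientMap
  let q : C(ℝ × ℝ, UnitAddCircle × UnitAddCircle) := ⟨_, hqq.continuous⟩
  have hq' : Topology.IsQuotientMap q := hqq
  let G : C(UnitAddCircle × UnitAddCircle, ℂ) := hq'.lift ⟨fun x => (g x : ℂ), by fun_prop⟩ (by
    rintro ⟨a, b⟩ ⟨c, d⟩ h
    have h1 : (a : UnitAddCircle) = c := congrArg Prod.fst h
    have h2 : (b : UnitAddCircle) = d := congrArg Prod.snd h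
    rw [QuotientAddGroup.eq_iff_sub_mem, AddSubgroup.mem_zmultiples_iff] at h1 h2
    obtain ⟨m, hm⟩ := h1
    obtain ⟨n, hn⟩ := h2
    have := hp (c, d) (m, n)
    simp only [zsmul_eq_mul, mul_one] at hm hn
    simp only [hm, hn, add_sub_cancel] at this
    simp [this])
  refine ⟨G.comp ⟨fun x => (x 0, x 1), by fun_prop⟩, fun x => ?_⟩
  exact congrFun (congrArg (fun f : C(ℝ × ℝ, ℂ) => (f : ℝ × ℝ → ℂ)) (hq'.lift_comp _ _)) x

lemma mFourier_qT (k : Fin 2 → ℤ) (x : ℝ × ℝ) :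
    UnitAddTorus.mFourier (-k) (qT x) = Ek (k 0, k 1) x := by
  simp only [UnitAddTorus.mFourier, ContinuousMap.coe_mk, Fin.prod_univ_two, Ek, qT]
  simp only [Matrix.cons_val_zero, Matrix.cons_val_one, fourier_coe_apply, Pi.neg_apply]
  congr 2 <;> push_cast <;> ring

lemma coef_eq (g : ℝ × ℝ → ℝ) (F : C(UnitAddTorus (Fin 2), ℂ)) (hF : ∀ x, F (qT x) = (g x : ℂ))
    (k : Fin 2 → ℤ) :
    UnitAddTorus.mFourierCoeff F k = ∫ x in T2, Ek (k 0, k 1) x * (g x : ℂ) := by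
  rw [UnitAddTorus.mFourierCoeff, torus_int]
  simp only [mFourier_qT, hF, smul_eq_mul]

lemma parseval (g : ℝ × ℝ → ℝ) (F : C(UnitAddTorus (Fin 2), ℂ)) (hF : ∀ x, F (qT x) = (g x : ℂ)) :
    HasSum (fun k : Fin 2 → ℤ => ‖UnitAddTorus.mFourierCoeff F k‖ ^ 2) (L2normSq g) := by
  have h := UnitAddTorus.hasSum_sq_mFourierCoeff (F.toLp 2 volume ℂ)
  simp only [UnitAddTorus.mFourierCoeff_toLp] at h
  convert h using 1
  have : ∫ t, ‖(F.toLp 2 volume ℂ : Lp ℂ 2 (volume : Measure (UnitAddTorus (Fin 2)))) t‖ ^ 2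
      = ∫ t, ‖F t‖ ^ 2 := by
    apply integral_congr_ae
    filter_upwards [F.coeFn_toLp (p := 2) (𝕜 := ℂ) volume] with t ht
    rw [ht]
  rw [this, torus_int, L2normSq]
  simp [hF]

/-- The weight. -/
def wt (k : ℤ × ℤ) : ℝ := 1 / (((k.1 : ℝ) ^ 2 + (k.2 : ℝ) ^ 2) ^ 2)

lemma wt_nonneg (k) : 0 ≤ wt k := by unfold wt; positivity

lemma lattice_eq : latticeSum = ∑' k, wt k := by
  unfold latticeSum wt
  congr 1
  ext k
  split_ifs with h
  · simp [h]
  · rfl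

lemma wt_summable' : Summable (fun k : Fin 2 → ℤ => wt (k 0, k 1)) := by
  refine Summable.of_nonneg_of_le (fun k => wt_nonneg _) (fun k => ?_)
    (EisensteinSeries.summable_one_div_norm_rpow (k := 4) (by norm_num))
  rw [Real.rpow_neg (norm_nonneg _), wt, one_div]
  have e : ‖k‖ ^ (4:ℝ) = (‖k‖ ^ 2) ^ 2 := by
    rw [← pow_mul]; exact_mod_cast Real.rpow_natCast ‖k‖ 4
  rw [e]
  by_cases hk : k = 0
  · simp [hk]
  have h0 : 0 < ‖k‖ := norm_pos_iff.mpr hk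
  apply inv_anti₀ (by positivity)
  apply pow_le_pow_left₀ (by positivity)
  have hn : (0:ℝ) ≤ (k 0:ℝ) ^ 2 + (k 1:ℝ) ^ 2 := by positivity
  refine (Real.le_sqrt' h0).mp ?_
  rw [pi_norm_le_iff_of_nonneg (Real.sqrt_nonneg _)]
  intro i
  apply Real.le_sqrt_of_sq_le
  fin_cases i <;> simp [Int.norm_eq_abs] <;> positivity

lemma wt_summable : Summable wt := by
  rw [← (finTwoArrowEquiv ℤ).summable_iff]
  exact wt_summable'

lemma lattice_eq' : latticeSum = ∑' k : Fin 2 → ℤ, wt (k 0, k 1) := by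
  rw [lattice_eq, ← (finTwoArrowEquiv ℤ).tsum_eq]
  rfl

theorem upper (η : ℝ × ℝ → ℝ) (hp : Periodic2 η) (hη : ContDiff ℝ 2 η) (x : ℝ × ℝ) :
    |η x - meanT2 η| ≤
        ((2 * Real.pi) ^ 2)⁻¹ * Real.sqrt latticeSum * Real.sqrt (L2normSq (lap η)) := by
  obtain ⟨F, hF⟩ := exists_lift η hη.continuous hp
  obtain ⟨L, hL⟩ := exists_lift (lap η) (lap_cont hη) (lap_per hp)
  have hpar := parseval _ L hL
  set c := UnitAddTorus.mFourierCoeff F with hc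
  set l := UnitAddTorus.mFourierCoeff L with hl
  have hcl : ∀ k : Fin 2 → ℤ, l k = -(((2 * π) ^ 2 * ((k 0:ℝ) ^ 2 + (k 1:ℝ) ^ 2) : ℝ) : ℂ) * c k := by
    intro k
    rw [hc, hl, coef_eq _ F hF, coef_eq _ L hL, coef_lap hη hp]
  have hnorm : ∀ k : Fin 2 → ℤ, k ≠ 0 →
      ‖c k‖ = ((2 * π) ^ 2)⁻¹ * (√(wt (k 0, k 1)) * ‖l k‖) := by
    intro k hk
    have hpos : 0 < (k 0:ℝ) ^ 2 + (k 1:ℝ) ^ 2 := by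
      by_contra hneg
      apply hk
      have h0 : (k 0:ℝ) = 0 := by nlinarith [sq_nonneg (k 0:ℝ), sq_nonneg (k 1:ℝ)]
      have h1 : (k 1:ℝ) = 0 := by nlinarith [sq_nonneg (k 0:ℝ), sq_nonneg (k 1:ℝ)]
      ext i
      fin_cases i
      · exact_mod_cast h0
      · exact_mod_cast h1
    rw [hcl k, norm_mul, norm_neg, Complex.norm_real, wt, Real.sqrt_div zero_le_one,
      Real.sqrt_one, Real.sqrt_sq hpos.le, Real.norm_of_nonneg (by positivity)]
    have := Real.pi_pos
    field_simp
  set B := ((2 * Real.pi) ^ 2)⁻¹ * Real.sqrt latticeSum * Real.sqrt (L2normSq (lap η)) with hB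
  have hfin : ∀ S : Finset (Fin 2 → ℤ), 0 ∉ S → ∑ k ∈ S, ‖c k‖ ≤ B := by
    intro S hS
    rw [Finset.sum_congr rfl (fun k hk => hnorm k (fun h => hS (h ▸ hk))), ← Finset.mul_sum, hB,
      mul_assoc]
    apply mul_le_mul_of_nonneg_left _ (by positivity)
    have cs := Real.sum_mul_le_sqrt_mul_sqrt S (fun k => √(wt (k 0, k 1))) (fun k => ‖l k‖)
    refine cs.trans ?_
    apply mul_le_mul _ _ (Real.sqrt_nonneg _) (Real.sqrt_nonneg _)
    · apply Real.sqrt_le_sqrt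
      simp_rw [Real.sq_sqrt (wt_nonneg _)]
      rw [lattice_eq']
      exact wt_summable'.sum_le_tsum _ (fun k _ => wt_nonneg _)
    · apply Real.sqrt_le_sqrt
      exact sum_le_hasSum _ (fun k _ => by positivity) hpar
  -- modified coefficients
  let c' : (Fin 2 → ℤ) → ℝ := fun k => if k = 0 then 0 else ‖c k‖
  have hc'0 : ∀ k, 0 ≤ c' k := by intro k; simp only [c']; split_ifs <;> positivity
  have hfin' : ∀ S : Finset (Fin 2 → ℤ), ∑ k ∈ S, c' k ≤ B := by
    intro S
    have := hfin (S.erase 0) (by simp)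
    refine le_trans (le_of_eq ?_) this
    rw [← Finset.sum_erase S (a := 0) (by simp [c'])]
    apply Finset.sum_congr rfl
    intro k hk
    simp [c', Finset.ne_of_mem_erase hk]
  have hs' : Summable c' := summable_of_sum_le hc'0 hfin'
  have hsn : Summable (fun k => ‖c k‖) := by
    refine (summable_congr_cofinite ?_).mp hs'
    filter_upwards [(Set.finite_singleton (0 : Fin 2 → ℤ)).compl_mem_cofinite] with k hk
    simp at hk
    simp [c', hk]
  have hsum := UnitAddTorus.hasSum_mFourier_series_apply_of_summable (f := F) hsn.of_norm (qT x)
  have hc0 : c 0 = (meanT2 η : ℂ) := by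
    rw [hc, coef_eq _ F hF, meanT2, ← integral_complex_ofReal]
    simp [Ek]
  have h2 := hsum.sub (hasSum_ite_eq (0 : Fin 2 → ℤ) (c 0))
  have h3 : ‖F (qT x) - c 0‖ ≤ ∑' k, c' k := by
    rw [← h2.tsum_eq]
    refine tsum_of_norm_bounded hs'.hasSum ?_
    intro k
    by_cases hk : k = 0
    · subst hk
      simp [c', UnitAddTorus.mFourier_zero, ← hc]
    · simp only [hk, if_false, sub_zero, norm_smul, c', ← hc]
      refine mul_le_of_le_one_right (norm_nonneg _) ?_
      exact (ContinuousMap.norm_coe_le_norm _ _).trans UnitAddTorus.mFourier_norm.le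
  rw [hF, hc0, ← Complex.ofReal_sub, Complex.norm_real, Real.norm_eq_abs] at h3
  exact h3.trans (Real.tsum_le_of_sum_le hc'0 hfin')

/-- Phase. -/
def ph (k : ℤ × ℤ) (x : ℝ × ℝ) : ℝ := 2 * π * (k.1 * x.1 + k.2 * x.2)

lemma ph_cont (k : ℤ × ℤ) : Continuous (ph k) := by unfold ph; fun_prop

lemma ph_smooth (k : ℤ × ℤ) : ContDiff ℝ 2 (ph k) := by unfold ph; fun_prop

lemma Ek_int (k : ℤ × ℤ) : ∫ x in T2, Ek k x = if k = 0 then 1 else 0 := by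
  split_ifs with h
  · subst h
    rw [T2_int _ (Ek_cont _)]
    simp [Ek]
  · have hc : ContDiff ℝ 1 (fun _ : ℝ × ℝ => (1:ℝ)) := contDiff_const
    have hp : Periodic2 (fun _ : ℝ × ℝ => (1:ℝ)) := fun _ _ => rfl
    have h1 := coef_d1 hc hp k
    have h2 := coef_d2 hc hp k
    simp only [d1, d2, deriv_const, Complex.ofReal_zero, mul_zero, integral_zero,
      Complex.ofReal_one, mul_one] at h1 h2
    have hpi : (π : ℂ) ≠ 0 := by exact_mod_cast Real.pi_ne_zero
    by_contra hne
    apply h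
    ext
    · simpa [hne, hpi] using h1.symm
    · simpa [hne, hpi] using h2.symm

lemma cos_int (k : ℤ × ℤ) : ∫ x in T2, Real.cos (ph k x) = if k = 0 then 1 else 0 := by
  have h : ∀ x, Real.cos (ph k x) = RCLike.re (Ek k x) := by
    intro x
    have : Ek k x = Complex.exp ((-(ph k x) : ℝ) * Complex.I) := by
      rw [Ek, ← Complex.exp_add, ph]
      congr 1
      push_cast
      ring
    rw [this]
    change _ = (Complex.exp _).re
    rw [Complex.exp_ofReal_mul_I_re, Real.cos_neg]
  simp_rw [h]
  rw [integral_re, Ek_int]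
  · split_ifs <;> simp
  · exact (Ek_cont k).continuousOn.integrableOn_compact T2_compact

lemma T2_integrable {f : ℝ × ℝ → ℝ} (hf : Continuous f) : Integrable f (volume.restrict T2) :=
  hf.continuousOn.integrableOn_compact T2_compact

lemma coscos_int (k l : ℤ × ℤ) : ∫ x in T2, Real.cos (ph k x) * Real.cos (ph l x) =
    ((if k = l then 1 else 0) + (if -k = l then 1 else 0)) / 2 := by
  have h : ∀ x, Real.cos (ph k x) * Real.cos (ph l x) =
      (Real.cos (ph (k - l) x) + Real.cos (ph (k + l) x)) / 2 := by
    intro x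
    have e1 : ph (k - l) x = ph k x - ph l x := by simp only [ph, Prod.fst_sub, Prod.snd_sub]; push_cast; ring
    have e2 : ph (k + l) x = ph k x + ph l x := by simp only [ph, Prod.fst_add, Prod.snd_add]; push_cast; ring
    rw [e1, e2, Real.cos_sub, Real.cos_add]
    ring
  simp_rw [h]
  have c1 := ph_cont (k - l)
  have c2 := ph_cont (k + l)
  rw [integral_div, integral_add (T2_integrable (by fun_prop)) (T2_integrable (by fun_prop)),
    cos_int, cos_int]
  simp only [sub_eq_zero, neg_eq_iff_add_eq_zero]

/-- The test function. -/
def tf (S : Finset (ℤ × ℤ)) (x : ℝ × ℝ) : ℝ := ∑ k ∈ S, wt k * Real.cos (ph k x)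

lemma tf_smooth (S) : ContDiff ℝ 2 (tf S) := by
  unfold tf
  apply ContDiff.sum
  intro k _
  exact contDiff_const.mul (ph_smooth k).cos

lemma tf_per (S) : Periodic2 (tf S) := by
  intro x m
  unfold tf
  apply Finset.sum_congr rfl
  intro k _
  have : ph k (x.1 + m.1, x.2 + m.2) = ph k x + (k.1 * m.1 + k.2 * m.2 : ℤ) * (2 * π) := by
    simp only [ph]; push_cast; ring
  rw [this, Real.cos_add_int_mul_two_pi]

lemma tf_mean (S) : meanT2 (tf S) = 0 := by
  unfold meanT2 tf
  rw [integral_finset_sum]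
  · apply Finset.sum_eq_zero
    intro k _
    rw [integral_const_mul, cos_int]
    split_ifs with h
    · simp [h, wt]
    · simp
  · intro k _
    have := ph_cont k
    exact T2_integrable (by fun_prop)

lemma ph_d1 (k : ℤ × ℤ) (s t : ℝ) : HasDerivAt (fun s => ph k (s, t)) (2 * π * k.1) s := by
  have := (((hasDerivAt_id s).const_mul (k.1:ℝ)).add_const (k.2 * t)).const_mul (2 * π)
  simpa [ph] using this

lemma ph_d2 (k : ℤ × ℤ) (s t : ℝ) : HasDerivAt (fun t => ph k (s, t)) (2 * π * k.2) t := by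
  have := (((hasDerivAt_id t).const_mul (k.2:ℝ)).const_add (k.1 * s)).const_mul (2 * π)
  simpa [ph] using this

lemma tf_lap (S) (x) : lap (tf S) x =
    ∑ k ∈ S, -(2 * π) ^ 2 * (((k.1:ℝ) ^ 2 + (k.2:ℝ) ^ 2) * wt k) * Real.cos (ph k x) := by
  have h1 : d1 (tf S) = fun x => ∑ k ∈ S, wt k * (-Real.sin (ph k x) * (2 * π * k.1)) := by
    ext ⟨s, t⟩
    exact (HasDerivAt.fun_sum fun k _ => ((ph_d1 k s t).cos).const_mul (wt k)).deriv
  have h2 : d2 (tf S) = fun x => ∑ k ∈ S, wt k * (-Real.sin (ph k x) * (2 * π * k.2)) := by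
    ext ⟨s, t⟩
    exact (HasDerivAt.fun_sum fun k _ => ((ph_d2 k s t).cos).const_mul (wt k)).deriv
  obtain ⟨s, t⟩ := x
  have h11 : d1 (d1 (tf S)) (s, t) = ∑ k ∈ S, wt k *
      (-(Real.cos (ph k (s, t)) * (2 * π * k.1)) * (2 * π * k.1)) := by
    rw [h1]
    exact (HasDerivAt.fun_sum fun k _ =>
      (((ph_d1 k s t).sin.fun_neg).mul_const (2 * π * k.1)).const_mul (wt k)).deriv
  have h22 : d2 (d2 (tf S)) (s, t) = ∑ k ∈ S, wt k *
      (-(Real.cos (ph k (s, t)) * (2 * π * k.2)) * (2 * π * k.2)) := by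
    rw [h2]
    exact (HasDerivAt.fun_sum fun k _ =>
      (((ph_d2 k s t).sin.fun_neg).mul_const (2 * π * k.2)).const_mul (wt k)).deriv
  rw [lap, h11, h22, ← Finset.sum_add_distrib]
  apply Finset.sum_congr rfl
  intro k _
  ring

lemma tf_L2 (S : Finset (ℤ × ℤ)) : L2normSq (lap (tf S)) ≤ ((2 * π) ^ 2) ^ 2 * ∑ k ∈ S, wt k := by
  let v : ℤ × ℤ → ℝ := fun k => ((k.1:ℝ) ^ 2 + (k.2:ℝ) ^ 2) * wt k
  have hv0 : ∀ k, 0 ≤ v k := fun k => mul_nonneg (by positivity) (wt_nonneg k)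
  have hvn : ∀ k, v (-k) = v k := by intro k; simp [v, wt]
  have hvv : ∀ k, v k * v k = wt k := by
    intro k
    simp only [v, wt]
    by_cases h : (k.1:ℝ) ^ 2 + (k.2:ℝ) ^ 2 = 0
    · simp [h]
    · field_simp
  have hsq : ∀ x, (lap (tf S) x) ^ 2 = ((2 * π) ^ 2) ^ 2 *
      ∑ k ∈ S, ∑ l ∈ S, v k * v l * (Real.cos (ph k x) * Real.cos (ph l x)) := by
    intro x
    have : lap (tf S) x = -(2 * π) ^ 2 * ∑ k ∈ S, v k * Real.cos (ph k x) := by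
      rw [tf_lap, Finset.mul_sum]
      apply Finset.sum_congr rfl
      intro k _
      simp only [v]; ring
    rw [this, mul_pow, neg_sq, sq (∑ k ∈ S, _), Finset.sum_mul_sum]
    congr 1
    apply Finset.sum_congr rfl
    intro k _
    apply Finset.sum_congr rfl
    intro l _
    ring
  unfold L2normSq
  simp_rw [hsq]
  rw [integral_const_mul]
  apply mul_le_mul_of_nonneg_left _ (by positivity)
  have hc : ∀ k, Continuous (ph k) := ph_cont
  rw [integral_finset_sum _ (fun k _ => T2_integrable (by fun_prop))]
  apply Finset.sum_le_sum
  intro k hk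
  rw [integral_finset_sum _ (fun l _ => T2_integrable (by fun_prop))]
  simp_rw [integral_const_mul, coscos_int]
  have e : ∀ l, v k * v l * (((if k = l then 1 else 0) + (if -k = l then 1 else 0)) / 2) =
      (if k = l then v k * v l / 2 else 0) + (if -k = l then v k * v l / 2 else 0) := by
    intro l; split_ifs <;> ring
  simp_rw [e]
  rw [Finset.sum_add_distrib, Finset.sum_ite_eq, Finset.sum_ite_eq, hvn, if_pos hk, hvv]
  have := wt_nonneg k
  split_ifs <;> linarith

theorem lower (C : ℝ)
    (h : ∀ η : ℝ × ℝ → ℝ, Periodic2 η → ContDiff ℝ 2 η →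
        ∀ x : ℝ × ℝ, |η x - meanT2 η| ≤ C * Real.sqrt (L2normSq (lap η))) :
    ((2 * Real.pi) ^ 2)⁻¹ * Real.sqrt latticeSum ≤ C := by
  have key : ∀ S : Finset (ℤ × ℤ), ∑ k ∈ S, wt k ≤ C * √(L2normSq (lap (tf S))) := by
    intro S
    have := h (tf S) (tf_per S) (tf_smooth S) 0
    rw [tf_mean, sub_zero] at this
    refine le_trans (le_trans (le_of_eq ?_) (le_abs_self _)) this
    simp [tf, ph]
  have hC : 0 ≤ C := by
    have h1 := key {(1, 0)}
    simp [wt] at h1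
    by_contra hneg
    push Not at hneg
    nlinarith [Real.sqrt_nonneg (L2normSq (lap (tf {(1, 0)})))]
  have hpi : 0 < (2 * π) ^ 2 := by positivity
  have hS : ∀ S : Finset (ℤ × ℤ), ∑ k ∈ S, wt k ≤ ((2 * π) ^ 2 * C) ^ 2 := by
    intro S
    have h1 := key S
    have h2 : √(L2normSq (lap (tf S))) ≤ (2 * π) ^ 2 * √(∑ k ∈ S, wt k) := by
      refine (Real.sqrt_le_sqrt (tf_L2 S)).trans (le_of_eq ?_)
      rw [Real.sqrt_mul (by positivity), Real.sqrt_sq hpi.le]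
    have h0 : 0 ≤ ∑ k ∈ S, wt k := Finset.sum_nonneg fun k _ => wt_nonneg k
    have h3 := h1.trans (mul_le_mul_of_nonneg_left h2 hC)
    set a := √(∑ k ∈ S, wt k) with ha
    have ha2 : ∑ k ∈ S, wt k = a ^ 2 := (Real.sq_sqrt h0).symm
    have ha0 : 0 ≤ a := Real.sqrt_nonneg _
    rw [ha2] at h3 ⊢
    apply pow_le_pow_left₀ ha0
    rcases ha0.eq_or_lt with h4 | h4
    · rw [← h4]; positivity
    · nlinarith
  rw [inv_mul_le_iff₀ hpi, lattice_eq]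
  apply Real.sqrt_le_iff.mpr
  exact ⟨by positivity, Real.tsum_le_of_sum_le wt_nonneg hS⟩

/-- The optimal constant in `‖η − η̄‖_{L∞} ≤ C_S ‖Δη‖_{L²}` on `T²` is
`C_S = (2π)⁻² (∑_{k ∈ ℤ²\{0}} |k|⁻⁴)^{1/2}`. -/
theorem optimal_constant_CS :
    (∀ η : ℝ × ℝ → ℝ, Periodic2 η → ContDiff ℝ 2 η →
      ∀ x : ℝ × ℝ, |η x - meanT2 η| ≤
        ((2 * Real.pi) ^ 2)⁻¹ * Real.sqrt latticeSum * Real.sqrt (L2normSq (lap η))) ∧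
    (∀ C : ℝ,
      (∀ η : ℝ × ℝ → ℝ, Periodic2 η → ContDiff ℝ 2 η →
        ∀ x : ℝ × ℝ, |η x - meanT2 η| ≤ C * Real.sqrt (L2normSq (lap η))) →
      ((2 * Real.pi) ^ 2)⁻¹ * Real.sqrt latticeSum ≤ C) := by
  exact ⟨fun η hp hη x => upper η hp hη x, fun C h => lower C h⟩
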